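/- arXiv:1101.3948 — 4 statements merged into one kernel-verified Lean document; each statement's English description precedes it below -/
import Mathlib

section
/- Let n, k, m be positive integers with k ≥ n+1 and let 1 ≤ l ≤ n. Then Σ_{J⊆{1,…,n}, |J|=l} S(k, m, J) = (1/m^{k−n+1}) · Σ 1/(q₁ q₂ ⋯ q_{n−1}), where the sum on the right runs over all tuples of positive integers (q₁,…,q_{n−1}) with m > q₁ > q₂ > ⋯ > q_{l−1} ≥ 1 and 1 ≤ q_l ≤ q_{l+1} ≤ ⋯ ≤ q_{n−1} ≤ m. -/
open Finset

/-- `PS p j` is the partial sum `p₁ + ⋯ + p_j` of the positive integers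
`pᵢ = p (i-1) + 1` encoded by `p : Fin N → ℕ`. -/
def PS {N : ℕ} (p : Fin N → ℕ) (j : ℕ) : ℕ :=
  ∑ i ∈ Finset.univ.filter (fun i : Fin N => (i : ℕ) < j), (p i + 1)

/-- `Ikr n k r` is the set `I(k,r)` of tuples `(k₁,…,kₙ)` of positive integers with
`kₙ ≥ 2`, `k₁ + ⋯ + kₙ = k` and `k₁ = ⋯ = k_{r-1} = 1`; the tuple is encoded as
`kv : Fin n → ℕ` with `k_j = kv (j-1)`. -/
def Ikr (n k r : ℕ) : Finset (Fin n → ℕ) :=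
  (Fintype.piFinset fun _ : Fin n => Finset.range (k + 1)).filter fun kv =>
    (∀ i, 1 ≤ kv i) ∧ (∀ i : Fin n, (i : ℕ) = n - 1 → 2 ≤ kv i) ∧
      (∑ i, kv i) = k ∧ ∀ i : Fin n, (i : ℕ) + 2 ≤ r → kv i = 1

/-- `S n k m J` is the quantity `S(k,m,J)`: the sum over `𝐤 ∈ I(k, max J)` and over
tuples `𝐦` of positive integers with `∑_{j∈J} m_j = m` of
`1/(m₁^{k₁}(m₁+m₂)^{k₂}⋯(m₁+⋯+mₙ)^{kₙ})`. -/
noncomputable def S (n k m : ℕ) (J : Finset (Fin n)) : ℝ :=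
  ∑ kv ∈ Ikr n k (J.sup fun j => (j : ℕ) + 1),
    ∑' mv : {mv : Fin n → ℕ // (∑ j ∈ J, (mv j + 1)) = m},
      (∏ i : Fin n, ((PS mv.val ((i : ℕ) + 1) : ℕ) : ℝ) ^ kv i)⁻¹

/-- `Qset n m l` is the set `Q_l` of tuples `(q₁,…,q_{n-1})` of positive integers with
`m > q₁ > ⋯ > q_{l-1} ≥ 1` and `1 ≤ q_l ≤ ⋯ ≤ q_{n-1} ≤ m`; the tuple is encoded as
`q : Fin (n-1) → ℕ` with `q_j = q (j-1) + 1`. -/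
def Qset (n m l : ℕ) : Finset (Fin (n - 1) → ℕ) :=
  (Fintype.piFinset fun _ : Fin (n - 1) => Finset.range m).filter fun q =>
    (∀ i : Fin (n - 1), (i : ℕ) < l - 1 → q i + 1 < m) ∧
    (∀ i j : Fin (n - 1), (i : ℕ) < (j : ℕ) → (j : ℕ) < l - 1 → q j < q i) ∧
    (∀ i j : Fin (n - 1), l - 1 ≤ (i : ℕ) → (i : ℕ) ≤ (j : ℕ) → q i ≤ q j) ∧
    (∀ i : Fin (n - 1), l - 1 ≤ (i : ℕ) → q i + 1 ≤ m)

/-!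
Sort the terms of `∑_{|J|=l} S(k, m, J)` by the sum `A = m` of the parts in `J` and the sum `B` of
the others. Without the extra factor `1/(m₁ + ⋯ + mₙ) = 1/(A + B)` which `kₙ ≥ 2` provides, and with
`w = k - n - 1`, they add up to `A^{-w} Z_l(A) Z_{n-l}(B)`, where `Z_l(A)` is the sum of
`1/(A₁ ⋯ A_l)` over `0 < A₁ < ⋯ < A_l = A`. Indeed, deleting the last index gives a recursion: if
that index is in `J` then all excesses `kᵢ - 1` before it vanish, otherwise `B` and the excess
decrease; and the product satisfies the same recursion because `A/(A + B) + B/(A + B) = 1`.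

It remains to sum `Z_{n-l}(B)/(m + B)` over `B`. Since `1/(B (m + B)) = (1/m)(1/B - 1/(m + B))`
telescopes, each of the `n - l` summations turns `∑_B` into a sum over `1 ≤ q ≤ m`, and the result
is `1/m` times the sum over the weak chain `q_l ≤ ⋯ ≤ q_{n-1} ≤ m`. The factor `m Z_l(m)` is the sum
over the strict chain `m > q₁ > ⋯ > q_{l-1}`.
-/

open Filter Topology
open scoped ENNReal

section Summation

lemma tsum_ite_mem {α : Type*} [DecidableEq α] (s : Finset α) (f : α → ℝ≥0∞) :
    ∑' x, (if x ∈ s then f x else 0) = ∑ x ∈ s, f x := by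
  rw [tsum_eq_sum fun x hx => if_neg hx, sum_ite_mem, inter_self]

lemma tsum_subtype_eq_tsum_ite {α : Type*} (p : α → Prop) [DecidablePred p] (f : α → ℝ≥0∞) :
    ∑' x : {x // p x}, f x = ∑' x, if p x then f x else 0 :=
  (_root_.tsum_subtype {x | p x} f).trans (tsum_congr fun _ => Set.indicator_apply ..)

lemma tsum_ite_lt (n : ℕ) (f : ℕ → ℝ≥0∞) :
    ∑' i, (if i < n then f i else 0) = ∑ i ∈ range n, f i := by
  simpa using tsum_ite_mem (range n) f

lemma tsum_ite_const {α : Type*} (p : Prop) [Decidable p] (f : α → ℝ≥0∞) :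
    ∑' x, (if p then f x else 0) = if p then ∑' x, f x else 0 := by
  split_ifs <;> simp

lemma tsum_sum_range_eq_tsum_tsum (f : ℕ → ℕ → ℝ≥0∞) :
    ∑' n, ∑ b ∈ range n, f b n = ∑' b, ∑' j, f b (j + (b + 1)) := by
  simp_rw [← tsum_ite_lt]
  rw [ENNReal.tsum_comm]
  refine tsum_congr fun b => ?_
  rw [← ENNReal.summable.sum_add_tsum_nat_add' (k := b + 1),
    sum_eq_zero fun n hn => if_neg (by simpa [Nat.lt_succ_iff] using hn), zero_add]
  exact tsum_congr fun j => if_pos (by omega)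

lemma tsum_fin_snoc {n : ℕ} {α : Type*} (f : (Fin (n + 1) → α) → ℝ≥0∞) :
    ∑' d, f d = ∑' (x : α) (d : Fin n → α), f (Fin.snoc (α := fun _ => α) d x) := by
  rw [← (Fin.snocEquiv fun _ : Fin (n + 1) => α).tsum_eq, ENNReal.tsum_prod']
  rfl

lemma hasSum_sub_add_of_antitone {f : ℕ → ℝ} (hf : Antitone f) (hlim : Tendsto f atTop (𝓝 0))
    (m : ℕ) : HasSum (fun j => f j - f (j + m)) (∑ i ∈ range m, f i) := by
  have telescope (i : ℕ) : HasSum (fun j => f (j + i) - f (j + i + 1)) (f i) := by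
    rw [hasSum_iff_tendsto_nat_of_nonneg fun j => sub_nonneg.2 (hf (Nat.le_succ _))]
    have partialSum (N : ℕ) : ∑ j ∈ range N, (f (j + i) - f (j + i + 1)) = f i - f (N + i) := by
      simpa [add_right_comm] using sum_range_sub' (fun j => f (j + i)) N
    simpa only [partialSum, sub_zero] using
      ((tendsto_add_atTop_iff_nat i).2 hlim).const_sub (f i)
  convert hasSum_sum fun i (_ : i ∈ range m) => telescope i using 2 with j
  exact (sum_range_sub' (fun i => f (j + i)) m).symm

lemma tsum_inv_mul_inv_add {c m : ℕ} (hc : 0 < c) (hm : 0 < m) :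
    ∑' j : ℕ, ((j + c : ℕ) : ℝ≥0∞)⁻¹ * ((m + (j + c) : ℕ) : ℝ≥0∞)⁻¹ =
      (m : ℝ≥0∞)⁻¹ * ∑ i ∈ range m, ((i + c : ℕ) : ℝ≥0∞)⁻¹ := by
  let f (j : ℕ) : ℝ := ((j + c : ℕ) : ℝ)⁻¹
  have f_nonneg (j : ℕ) : 0 ≤ f j := by positivity
  have f_antitone : Antitone f := fun i j hij => by
    dsimp only [f]
    gcongr
  have f_tendsto : Tendsto f atTop (𝓝 0) := (tendsto_add_atTop_iff_nat c).2
    (tendsto_inv_atTop_zero.comp tendsto_natCast_atTop_atTop)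
  have ofReal_inv (x : ℕ) (hx : 0 < x) : ENNReal.ofReal (x : ℝ)⁻¹ = (x : ℝ≥0∞)⁻¹ := by
    rw [ENNReal.ofReal_inv_of_pos (by exact_mod_cast hx), ENNReal.ofReal_natCast]
  have partialFractions (j : ℕ) : ((j + c : ℕ) : ℝ)⁻¹ * ((m + (j + c) : ℕ) : ℝ)⁻¹ =
      (m : ℝ)⁻¹ * (f j - f (j + m)) := by
    have : (m : ℝ) ≠ 0 := by positivity
    have : (j + c : ℝ) ≠ 0 := by positivity
    have : (j + m + c : ℝ) ≠ 0 := by positivity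
    have : (m + (j + c) : ℝ) ≠ 0 := by positivity
    simp only [f]
    push_cast
    field_simp
    ring
  have hsum := (hasSum_sub_add_of_antitone f_antitone f_tendsto m).mul_left (m : ℝ)⁻¹
  simp_rw [← partialFractions] at hsum
  calc ∑' j : ℕ, ((j + c : ℕ) : ℝ≥0∞)⁻¹ * ((m + (j + c) : ℕ) : ℝ≥0∞)⁻¹
    _ = ∑' j : ℕ, ENNReal.ofReal (((j + c : ℕ) : ℝ)⁻¹ * ((m + (j + c) : ℕ) : ℝ)⁻¹) :=
      tsum_congr fun j => by
        rw [ENNReal.ofReal_mul (by positivity), ofReal_inv _ (by omega), ofReal_inv _ (by omega)]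
    _ = ENNReal.ofReal ((m : ℝ)⁻¹ * ∑ i ∈ range m, f i) := by
      rw [← hsum.tsum_eq,
        ENNReal.ofReal_tsum_of_nonneg (fun j => by positivity) hsum.summable]
    _ = (m : ℝ≥0∞)⁻¹ * ∑ i ∈ range m, ((i + c : ℕ) : ℝ≥0∞)⁻¹ := by
      rw [ENNReal.ofReal_mul (by positivity), ofReal_inv m hm,
        ENNReal.ofReal_sum_of_nonneg fun i _ => f_nonneg i]
      exact congrArg _ (sum_congr rfl fun i _ => ofReal_inv _ (by omega))

end Summation

section ChainSum

variable {α R : Type*} [CommSemiring R]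

/-- `chainSum s f a x` is the sum of `f y₁ ⋯ f y_a` over the chains
`y₁ ∈ s x, y₂ ∈ s y₁, …, y_a ∈ s y_{a-1}`. With `s = range` and with `s = fun y => range (y + 1)`
it evaluates the multiple harmonic sums over `q₁ > ⋯ > q_{l-1}` and over `q_l ≤ ⋯ ≤ q_{n-1}`. -/
def chainSum (s : α → Finset α) (f : α → R) : ℕ → α → R
  | 0, _ => 1
  | a + 1, x => ∑ y ∈ s x, f y * chainSum s f a y

/-- The tuples `(y₁, …, y_a)` with `y₁, …, y_a ∈ s x` and `y_j ∈ s y_i` for `i < j`, where `s x` is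
thought of as the set of elements allowed to follow `x` in a chain. -/
def chainsFrom [DecidableEq α] (s : α → Finset α) (a : ℕ) (x : α) : Finset (Fin a → α) :=
  {q ∈ Fintype.piFinset fun _ => s x | ∀ i j, i < j → q j ∈ s (q i)}

lemma sum_chainsFrom_prod [DecidableEq α] {s : α → Finset α} (hs : ∀ x, ∀ y ∈ s x, s y ⊆ s x)
    (f : α → R) (a : ℕ) (x : α) :
    ∑ q ∈ chainsFrom s a x, ∏ i, f (q i) = chainSum s f a x := by
  induction a generalizing x with
  | zero => simp [chainsFrom, chainSum]
  | succ a ih =>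
    simp_rw [chainSum, ← ih, mul_sum, sum_sigma']
    refine sum_bij' (fun q _ => ⟨q 0, Fin.tail q⟩) (fun p _ => Fin.cons p.1 p.2) ?_ ?_ ?_ ?_ ?_
    · simp only [chainsFrom, mem_filter, Fintype.mem_piFinset, mem_sigma, Fin.tail]
      exact fun q ⟨hq, hlt⟩ => ⟨hq 0, fun i => hlt 0 i.succ i.succ_pos,
        fun i j hij => hlt i.succ j.succ (Fin.succ_lt_succ_iff.2 hij)⟩
    · simp only [chainsFrom, mem_filter, Fintype.mem_piFinset, mem_sigma, Fin.forall_fin_succ,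
        Fin.cons_zero, Fin.cons_succ, Fin.succ_lt_succ_iff]
      exact fun p ⟨hx, hp, hlt⟩ => ⟨⟨hx, fun i => hs x p.1 hx (hp i)⟩,
        ⟨by simp, fun j _ => hp j⟩, fun i => ⟨by simp, hlt i⟩⟩
    · simp
    · simp
    · simp [Fin.prod_univ_succ, Fin.tail]

lemma mem_Qset_iff {n x a : ℕ} (u : Fin n → ℕ) :
    u ∈ Qset (n + 1) (x + 1) (a + 1) ↔ (∀ i, u i ≤ x) ∧
      (∀ i : Fin n, (i : ℕ) < a → u i < x) ∧ (∀ i j : Fin n, i < j → (j : ℕ) < a → u j < u i) ∧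
      ∀ i j : Fin n, a ≤ (i : ℕ) → i ≤ j → u i ≤ u j := by
  refine mem_filter.trans ?_
  simpa [Nat.lt_succ_iff] using fun h _ _ _ i _ => h i

lemma append_mem_Qset_iff {a r x : ℕ} (q : Fin a → ℕ) (p : Fin r → ℕ) :
    (Fin.append q p : Fin (a + r) → ℕ) ∈ Qset (a + r + 1) (x + 1) (a + 1) ↔
      q ∈ chainsFrom range a x ∧ p ∘ Fin.rev ∈ chainsFrom (fun y => range (y + 1)) r x := by
  simp only [mem_Qset_iff, chainsFrom, mem_filter, Fintype.mem_piFinset, mem_range,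
    Fin.forall_fin_add, Fin.append_left, Fin.append_right, Fin.val_castAdd, Fin.val_natAdd,
    Function.comp_apply, Fin.lt_def, Fin.le_def, Nat.lt_succ_iff]
  constructor
  · rintro ⟨⟨-, p_le⟩, ⟨q_lt, -⟩, ⟨q_anti, -⟩, -, p_mono⟩
    refine ⟨⟨fun i => q_lt i i.isLt, fun i j hij => (q_anti i).1 j hij j.isLt⟩,
      fun i => p_le i.rev, fun i j hij => (p_mono j.rev).2 i.rev (by omega) ?_⟩
    have := Fin.val_rev i
    have := Fin.val_rev j
    omega
  · rintro ⟨⟨q_lt, q_anti⟩, p_le, p_anti⟩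
    have p_le' (i : Fin r) : p i ≤ x := by simpa using p_le i.rev
    have p_mono (i j : Fin r) (hij : (i : ℕ) ≤ j) : p i ≤ p j := by
      rcases hij.eq_or_lt with heq | hlt
      · rw [Fin.ext heq]
      · simpa using p_anti j.rev i.rev (Fin.rev_lt_rev.2 hlt)
    exact ⟨⟨fun i => (q_lt i).le, p_le'⟩, ⟨fun i _ => q_lt i, fun i => by omega⟩,
      ⟨fun i => ⟨fun j hij _ => q_anti i j hij, fun j => by omega⟩,
        fun i => ⟨fun j => by omega, fun j => by omega⟩⟩,
      fun i => ⟨fun j => by omega, fun j => by omega⟩,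
      fun i => ⟨fun j => by omega, fun j _ hij => p_mono i j (by simpa using hij)⟩⟩

lemma sum_Qset_prod (f : ℕ → R) (a r x : ℕ) :
    ∑ q ∈ Qset (a + r + 1) (x + 1) (a + 1), ∏ i, f (q i) =
      chainSum range f a x * chainSum (fun y => range (y + 1)) f r x := by
  rw [← sum_chainsFrom_prod (by simp +contextual [le_of_lt]),
    ← sum_chainsFrom_prod (by simp +contextual), sum_mul_sum, ← sum_product']
  refine (sum_equiv (((Equiv.refl _).prodCongr (Fin.revPerm.arrowCongr (Equiv.refl ℕ))).trans
    (Fin.appendEquiv a r)) (fun p => ?_) fun p _ => ?_).symm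
  · refine mem_product.trans ((append_mem_Qset_iff p.1 (p.2 ∘ Fin.rev)).trans ?_).symm
    rw [Function.comp_assoc, Fin.rev_involutive.comp_self, Function.comp_id]
  · rw [← Equiv.prod_comp Fin.revPerm fun i => f (p.2 i)]
    exact ((Fin.prod_univ_add _).trans (by simp)).symm

end ChainSum

section StrictChainSum

/-- `strictChainSum l A` is the sum of `1/(A₁ ⋯ A_l)` over the chains `0 < A₁ < ⋯ < A_l = A`; for
`l = 0` the only chain is the empty one, ending at `0`. -/
noncomputable def strictChainSum : ℕ → ℕ → ℝ≥0∞
  | 0, A => if A = 0 then 1 else 0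
  | l + 1, A => (A : ℝ≥0∞)⁻¹ * ∑ a ∈ range A, strictChainSum l a

/-- The reciprocal `1/q` of the positive integer `q` encoded, as in `Qset`, by `q - 1`. -/
noncomputable def invSucc (q : ℕ) : ℝ≥0∞ := ((q + 1 : ℕ) : ℝ≥0∞)⁻¹

lemma invSucc_ne_top (q : ℕ) : invSucc q ≠ ⊤ :=
  ENNReal.inv_ne_top.2 (by exact_mod_cast q.succ_ne_zero)

lemma toReal_invSucc (q : ℕ) : (invSucc q).toReal = ((q : ℝ) + 1)⁻¹ := by
  rw [invSucc, ENNReal.toReal_inv, ENNReal.toReal_natCast, Nat.cast_succ]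

lemma strictChainSum_succ_zero (l : ℕ) : strictChainSum (l + 1) 0 = 0 := by
  simp [strictChainSum]

lemma mul_strictChainSum_succ (l A : ℕ) :
    A * strictChainSum (l + 1) A = ∑ a ∈ range A, strictChainSum l a := by
  rcases eq_or_ne A 0 with rfl | hA
  · simp
  · rw [strictChainSum, ← mul_assoc,
      ENNReal.mul_inv_cancel (by exact_mod_cast hA) (ENNReal.natCast_ne_top A), one_mul]

lemma sum_range_strictChainSum (l x : ℕ) :
    ∑ a ∈ range (x + 1), strictChainSum l a = chainSum range invSucc l x := by
  induction l generalizing x with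
  | zero => simp [strictChainSum, chainSum]
  | succ l ih =>
    rw [sum_range_succ', strictChainSum_succ_zero, add_zero]
    exact sum_congr rfl fun y _ => by rw [strictChainSum, ih, invSucc]

lemma tsum_strictChainSum_mul_inv_add (r x : ℕ) :
    ∑' B : ℕ, strictChainSum r B * ((x + 1 + B : ℕ) : ℝ≥0∞)⁻¹ =
      invSucc x * chainSum (fun y => range (y + 1)) invSucc r x := by
  induction r generalizing x with
  | zero =>
    rw [tsum_eq_single 0 fun B hB => by simp [strictChainSum, hB]]
    simp [strictChainSum, chainSum, invSucc]
  | succ r ih =>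
    calc ∑' B : ℕ, strictChainSum (r + 1) B * ((x + 1 + B : ℕ) : ℝ≥0∞)⁻¹
      _ = ∑' B : ℕ, ∑ b ∈ range B, strictChainSum r b *
            ((B : ℝ≥0∞)⁻¹ * ((x + 1 + B : ℕ) : ℝ≥0∞)⁻¹) := tsum_congr fun B => by
        rw [strictChainSum, ← sum_mul]
        ring
      _ = ∑' b : ℕ, strictChainSum r b *
            (invSucc x * ∑ i ∈ range (x + 1), ((i + (b + 1) : ℕ) : ℝ≥0∞)⁻¹) := by
        rw [tsum_sum_range_eq_tsum_tsum]
        exact tsum_congr fun b => by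
          rw [ENNReal.tsum_mul_left, tsum_inv_mul_inv_add b.succ_pos x.succ_pos, invSucc]
      _ = ∑ i ∈ range (x + 1), invSucc x *
            ∑' b : ℕ, strictChainSum r b * ((i + 1 + b : ℕ) : ℝ≥0∞)⁻¹ := by
        simp_rw [mul_sum, ← ENNReal.tsum_mul_left]
        rw [Summable.tsum_finsetSum fun _ _ => ENNReal.summable]
        refine sum_congr rfl fun i _ => tsum_congr fun b => ?_
        rw [add_right_comm, add_assoc i, mul_left_comm]
      _ = invSucc x * chainSum (fun y => range (y + 1)) invSucc (r + 1) x := by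
        simp_rw [ih, chainSum, mul_sum]

end StrictChainSum

section Shuffle

/-- The data which a term of `∑_J S(k, m, J)` attaches to an index `i`: whether `i ∈ J`, the part
`mᵢ`, encoded as `mᵢ - 1`, and the excess of `kᵢ` over its least admissible value. -/
@[ext]
structure Letter where
  mem : Bool
  part : ℕ
  excess : ℕ

lemma tsum_letter (f : Letter → ℝ≥0∞) :
    ∑' x, f x = ∑' (p : ℕ) (e : ℕ), f ⟨true, p, e⟩ + ∑' (p : ℕ) (e : ℕ), f ⟨false, p, e⟩ := by
  let toLetter : Bool × ℕ × ℕ ≃ Letter :=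
    ⟨fun x => ⟨x.1, x.2.1, x.2.2⟩, fun x => (x.mem, x.part, x.excess), fun _ => rfl, fun _ => rfl⟩
  rw [← toLetter.tsum_eq, ENNReal.tsum_prod', tsum_bool, add_comm, ENNReal.tsum_prod',
    ENNReal.tsum_prod']
  rfl

/-- A word in the letters `Letter` is an `(l, w, A, B)`-shuffle if its set `J` of marked indices has
`l` elements, its excesses vanish before `max J` and add up to `w`, and its parts add up to `A` over
`J` and to `B` over the complement of `J`. -/
structure IsShuffle {n : ℕ} (l w A B : ℕ) (d : Fin n → Letter) : Prop where
  card_eq : ∑ i, (if (d i).mem then 1 else 0) = l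
  sum_mem : ∑ i, (if (d i).mem then (d i).part + 1 else 0) = A
  sum_notMem : ∑ i, (if (d i).mem then 0 else (d i).part + 1) = B
  sum_excess : ∑ i, (d i).excess = w
  excess_eq_zero : ∀ i j, i < j → (d j).mem → (d i).excess = 0

/-- The term `1/(m₁^{k₁}(m₁+m₂)^{k₂}⋯(m₁+⋯+mₙ)^{kₙ})` of `S(k, m, J)`, where `mv` encodes
`m₁, …, mₙ` as in `PS`. -/
noncomputable def zetaTerm {n : ℕ} (kv mv : Fin n → ℕ) : ℝ≥0∞ :=
  ∏ i : Fin n, ((PS mv (i + 1) : ℕ) : ℝ≥0∞)⁻¹ ^ kv i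

/-- The term of a word, where `kᵢ` is the excess at `i` plus `1` for every `i`, the last one
included; this leaves out the factor `1/(m₁ + ⋯ + mₙ)` which `kₙ ≥ 2` adds. -/
noncomputable def wordTerm {n : ℕ} (d : Fin n → Letter) : ℝ≥0∞ :=
  zetaTerm (fun i => (d i).excess + 1) fun i => (d i).part

open Classical in
/-- The sum of the terms of all `(l, w, A, B)`-shuffles of length `n`. -/
noncomputable def shuffleSum (n l w A B : ℕ) : ℝ≥0∞ :=
  ∑' d : Fin n → Letter, if IsShuffle l w A B d then wordTerm d else 0

variable {n l w A B : ℕ}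

lemma PS_snoc_castSucc (p : Fin n → ℕ) (x : ℕ) (i : Fin n) :
    PS (Fin.snoc (α := fun _ => ℕ) p x) (i + 1) = PS p (i + 1) := by
  simp [PS, sum_filter, Fin.sum_univ_castSucc]

lemma IsShuffle.PS_eq {d : Fin n → Letter} (h : IsShuffle l w A B d) {N : ℕ} (hN : n ≤ N) :
    PS (fun i => (d i).part) N = A + B := by
  rw [PS, filter_true_of_mem fun i _ => i.isLt.trans_le hN, ← h.sum_mem, ← h.sum_notMem,
    ← sum_add_distrib]
  exact sum_congr rfl fun i _ => by split_ifs <;> simp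

lemma IsShuffle.wordTerm_snoc {d : Fin n → Letter} {x : Letter}
    (h : IsShuffle l w A B (Fin.snoc (α := fun _ => Letter) d x)) :
    wordTerm (Fin.snoc (α := fun _ => Letter) d x) =
      ((A + B : ℕ) : ℝ≥0∞)⁻¹ ^ (x.excess + 1) * wordTerm d := by
  have snoc_part : (fun j => (Fin.snoc (α := fun _ => Letter) d x j).part) =
      Fin.snoc (α := fun _ => ℕ) (fun j => (d j).part) x.part :=
    Fin.comp_snoc (α := Letter) Letter.part d x
  have PS_eq := h.PS_eq le_rfl
  rw [wordTerm, zetaTerm, Fin.prod_univ_castSucc, mul_comm, Fin.snoc_last, Fin.val_last, PS_eq]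
  simp only [snoc_part, Fin.val_castSucc, PS_snoc_castSucc, Fin.snoc_castSucc, wordTerm, zetaTerm]

open Classical in
lemma tsum_wordTerm_snoc {l' w' A' B' : ℕ} {C : Prop} (x : Letter)
    (hx : ∀ d : Fin n → Letter, IsShuffle l w A B (Fin.snoc (α := fun _ => Letter) d x) ↔
      C ∧ IsShuffle l' w' A' B' d) :
    ∑' d : Fin n → Letter, (if IsShuffle l w A B (Fin.snoc (α := fun _ => Letter) d x) then
        wordTerm (Fin.snoc (α := fun _ => Letter) d x) else 0) =
      if C then ((A + B : ℕ) : ℝ≥0∞)⁻¹ ^ (x.excess + 1) * shuffleSum n l' w' A' B' else 0 := by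
  rw [shuffleSum, ← ENNReal.tsum_mul_left, ← tsum_ite_const]
  refine tsum_congr fun d => ?_
  rw [mul_ite, mul_zero, ← ite_and]
  simp only [← hx]
  split_ifs with h
  exacts [h.wordTerm_snoc, rfl]

lemma not_isShuffle_zero_snoc (d : Fin n → Letter) (p e : ℕ) :
    ¬ IsShuffle 0 w A B (Fin.snoc (α := fun _ => Letter) d ⟨true, p, e⟩) := fun h =>
  absurd h.card_eq (by rw [Fin.sum_univ_castSucc]; simp)

lemma isShuffle_snoc_true_iff (d : Fin n → Letter) (p e : ℕ) :
    IsShuffle (l + 1) w A B (Fin.snoc (α := fun _ => Letter) d ⟨true, p, e⟩) ↔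
      (p < A ∧ e = w) ∧ IsShuffle l 0 (A - 1 - p) B d := by
  constructor
  · rintro ⟨h_card, h_mem, h_notMem, h_excess, h_zero⟩
    have excess_zero (i : Fin n) : (d i).excess = 0 := by
      simpa using h_zero i.castSucc (Fin.last n) i.castSucc_lt_last (by simp)
    simp only [Fin.sum_univ_castSucc, Fin.snoc_castSucc, Fin.snoc_last, if_true, excess_zero,
      sum_const_zero] at h_card h_mem h_notMem h_excess
    exact ⟨by omega, by omega, by omega, by omega, by simp [excess_zero],
      fun i _ _ _ => excess_zero i⟩
  · rintro ⟨⟨hp, rfl⟩, h_card, h_mem, h_notMem, h_excess, -⟩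
    have excess_zero (i : Fin n) : (d i).excess = 0 := sum_eq_zero_iff.1 h_excess i (mem_univ i)
    refine ⟨?_, ?_, ?_, ?_, fun i j hij _ => ?excess_eq_zero⟩
    case excess_eq_zero =>
      obtain ⟨i, rfl⟩ := Fin.exists_castSucc_eq.2 (hij.trans_le (Fin.le_last j)).ne
      simpa using excess_zero i
    all_goals
      simp only [Fin.sum_univ_castSucc, Fin.snoc_castSucc, Fin.snoc_last, if_true]
      omega

lemma isShuffle_snoc_false_iff (d : Fin n → Letter) (p e : ℕ) :
    IsShuffle l w A B (Fin.snoc (α := fun _ => Letter) d ⟨false, p, e⟩) ↔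
      (p < B ∧ e < w + 1) ∧ IsShuffle l (w - e) A (B - 1 - p) d := by
  constructor
  · rintro ⟨h_card, h_mem, h_notMem, h_excess, h_zero⟩
    simp only [Fin.sum_univ_castSucc, Fin.snoc_castSucc, Fin.snoc_last, Bool.false_eq_true,
      if_false] at h_card h_mem h_notMem h_excess
    refine ⟨by omega, by omega, by omega, by omega, by omega, fun i j hij hj => ?_⟩
    simpa using h_zero i.castSucc j.castSucc hij (by simpa using hj)
  · rintro ⟨⟨hp, he⟩, h_card, h_mem, h_notMem, h_excess, h_zero⟩
    refine ⟨?_, ?_, ?_, ?_, fun i j hij hj => ?excess_eq_zero⟩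
    case excess_eq_zero =>
      obtain ⟨i, rfl⟩ := Fin.exists_castSucc_eq.2 (hij.trans_le (Fin.le_last j)).ne
      induction j using Fin.lastCases with
      | last => simp at hj
      | cast j => simpa using h_zero i j (by simpa using hij) (by simpa using hj)
    all_goals
      simp only [Fin.sum_univ_castSucc, Fin.snoc_castSucc, Fin.snoc_last, Bool.false_eq_true,
        if_false]
      omega

lemma shuffleSum_succ_succ (n l w A B : ℕ) :
    shuffleSum (n + 1) (l + 1) w A B =
      ((A + B : ℕ) : ℝ≥0∞)⁻¹ ^ (w + 1) * ∑ a ∈ range A, shuffleSum n l 0 a B +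
      ∑ b ∈ range B, ∑ e ∈ range (w + 1),
        ((A + B : ℕ) : ℝ≥0∞)⁻¹ ^ (e + 1) * shuffleSum n (l + 1) (w - e) A b := by
  rw [shuffleSum, tsum_fin_snoc, tsum_letter]
  simp only [tsum_wordTerm_snoc _ fun d => isShuffle_snoc_true_iff d _ _,
    tsum_wordTerm_snoc _ fun d => isShuffle_snoc_false_iff d _ _, ite_and, tsum_ite_const,
    tsum_ite_lt, tsum_ite_eq]
  rw [mul_sum]
  exact congrArg₂ (· + ·) (sum_range_reflect (fun a => _ * shuffleSum n l 0 a B) A)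
    (sum_range_reflect (fun b => ∑ e ∈ range (w + 1),
      ((A + B : ℕ) : ℝ≥0∞)⁻¹ ^ (e + 1) * shuffleSum n (l + 1) (w - e) A b) B)

lemma shuffleSum_succ_zero (n w A B : ℕ) :
    shuffleSum (n + 1) 0 w A B = ∑ b ∈ range B, ∑ e ∈ range (w + 1),
      ((A + B : ℕ) : ℝ≥0∞)⁻¹ ^ (e + 1) * shuffleSum n 0 (w - e) A b := by
  rw [shuffleSum, tsum_fin_snoc, tsum_letter]
  simp only [not_isShuffle_zero_snoc, if_false, tsum_zero, zero_add,
    tsum_wordTerm_snoc _ fun d => isShuffle_snoc_false_iff d _ _, ite_and, tsum_ite_const,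
    tsum_ite_lt]
  exact sum_range_reflect
    (fun b => ∑ e ∈ range (w + 1), ((A + B : ℕ) : ℝ≥0∞)⁻¹ ^ (e + 1) * shuffleSum n 0 (w - e) A b) B

lemma shuffleSum_zero (A B : ℕ) :
    shuffleSum 0 0 0 A B = strictChainSum 0 A * strictChainSum 0 B := by
  have isShuffle_iff (d : Fin 0 → Letter) : IsShuffle 0 0 A B d ↔ A = 0 ∧ B = 0 :=
    ⟨fun h => ⟨h.sum_mem.symm, h.sum_notMem.symm⟩,
      fun h => ⟨rfl, h.1.symm, h.2.symm, rfl, fun i => i.elim0⟩⟩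
  simp [shuffleSum, isShuffle_iff, strictChainSum, wordTerm, zetaTerm, ← ite_and, and_comm]

lemma shuffleSum_eq_zero_of_lt (h : n < l) : shuffleSum n l w A B = 0 := by
  refine ENNReal.tsum_eq_zero.2 fun d => if_neg fun hd => ?_
  have := card_filter_le (univ : Finset (Fin n)) fun i => (d i).mem
  rw [card_filter, hd.card_eq, card_univ, Fintype.card_fin] at this
  omega

lemma mul_sum_pow_mul_pow_add {R : Type*} [CommSemiring R] {A B a x : R} (ha : a * A = 1)
    (hx : x * (A + B) = 1) (w : ℕ) :
    A * x ^ (w + 1) + B * ∑ e ∈ range (w + 1), x ^ (e + 1) * a ^ (w - e) = a ^ w := by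
  induction w with
  | zero => simpa [mul_comm, mul_add] using hx
  | succ w ih =>
    rw [sum_range_succ']
    simp only [pow_succ' x (_ + 1), mul_assoc, ← mul_sum, Nat.add_sub_add_right]
    calc A * (x * x ^ (w + 1)) + B * (x * (∑ e ∈ range (w + 1), x ^ (e + 1) * a ^ (w - e)) +
          x ^ (0 + 1) * a ^ (w + 1 - 0))
      _ = x * (A * x ^ (w + 1) + B * ∑ e ∈ range (w + 1), x ^ (e + 1) * a ^ (w - e)) +
            B * x * a ^ (w + 1) := by rw [Nat.sub_zero]; ring
      _ = x * (a * A) * a ^ w + B * x * a ^ (w + 1) := by rw [ih, ha, mul_one]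
      _ = x * (A + B) * a ^ (w + 1) := by ring
      _ = a ^ (w + 1) := by rw [hx, one_mul]

lemma inv_pow_mul_strictChainSum_mul_strictChainSum (l r w A B : ℕ) :
    (A : ℝ≥0∞)⁻¹ ^ w * strictChainSum (l + 1) A * strictChainSum (r + 1) B =
      ((A + B : ℕ) : ℝ≥0∞)⁻¹ ^ (w + 1) *
        ∑ a ∈ range A, strictChainSum l a * strictChainSum (r + 1) B +
      ∑ b ∈ range B, ∑ e ∈ range (w + 1), ((A + B : ℕ) : ℝ≥0∞)⁻¹ ^ (e + 1) *
        ((A : ℝ≥0∞)⁻¹ ^ (w - e) * strictChainSum (l + 1) A * strictChainSum r b) := by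
  rcases eq_or_ne A 0 with rfl | hA
  · simp [strictChainSum_succ_zero]
  have inv_mul : (A : ℝ≥0∞)⁻¹ * A = 1 :=
    ENNReal.inv_mul_cancel (by exact_mod_cast hA) (ENNReal.natCast_ne_top A)
  have inv_add_mul_add : ((A + B : ℕ) : ℝ≥0∞)⁻¹ * (A + B) = 1 := by
    rw [← Nat.cast_add]
    exact ENNReal.inv_mul_cancel (by exact_mod_cast (by omega : A + B ≠ 0))
      (ENNReal.natCast_ne_top _)
  rw [← mul_sum_pow_mul_pow_add inv_mul inv_add_mul_add, ← sum_mul, ← mul_strictChainSum_succ,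
    sum_comm]
  simp_rw [← mul_assoc, ← mul_sum, ← mul_strictChainSum_succ, ← sum_mul]
  ring

lemma shuffleSum_zero_left (r A B : ℕ) :
    shuffleSum r 0 0 A B = strictChainSum 0 A * strictChainSum r B := by
  induction r generalizing B with
  | zero => exact shuffleSum_zero A B
  | succ r ih =>
    rw [shuffleSum_succ_zero]
    rcases eq_or_ne A 0 with rfl | hA
    · simp [ih, strictChainSum, mul_sum]
    · simp [ih, strictChainSum, hA]

lemma shuffleSum_succ_self (l w A B : ℕ) :
    shuffleSum (l + 1) (l + 1) w A B =
      (A : ℝ≥0∞)⁻¹ ^ w * strictChainSum (l + 1) A * strictChainSum 0 B := by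
  have shuffleSum_self (a : ℕ) :
      shuffleSum l l 0 a B = strictChainSum l a * strictChainSum 0 B := by
    cases l with
    | zero => exact shuffleSum_zero a B
    | succ l => simpa using shuffleSum_succ_self l 0 a B
  simp only [shuffleSum_succ_succ, shuffleSum_self, shuffleSum_eq_zero_of_lt l.lt_succ_self,
    mul_zero, sum_const_zero, add_zero]
  rcases eq_or_ne B 0 with rfl | hB
  · simp [strictChainSum, pow_succ, mul_assoc]
  · simp [strictChainSum, hB]

lemma shuffleSum_succ_left (l r w A B : ℕ) :
    shuffleSum (l + 1 + r) (l + 1) w A B =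
      (A : ℝ≥0∞)⁻¹ ^ w * strictChainSum (l + 1) A * strictChainSum r B := by
  induction l generalizing r w A B with
  | zero =>
    induction r generalizing w B with
    | zero => exact shuffleSum_succ_self 0 w A B
    | succ r ih =>
      rw [← add_assoc, shuffleSum_succ_succ, inv_pow_mul_strictChainSum_mul_strictChainSum]
      simp_rw [ih, zero_add, Nat.add_comm 1 r, shuffleSum_zero_left]
  | succ l ihl =>
    induction r generalizing w B with
    | zero => exact shuffleSum_succ_self (l + 1) w A B
    | succ r ih =>
      rw [← add_assoc, shuffleSum_succ_succ, inv_pow_mul_strictChainSum_mul_strictChainSum]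
      simp_rw [ih, add_right_comm (l + 1) 1 r, add_assoc (l + 1) r 1, ihl, pow_zero, one_mul]

end Shuffle

section Evaluation

/-- The quantity `S(k, m, J)` as a sum in `[0, ∞]`. -/
noncomputable def extendedS (n k m : ℕ) (J : Finset (Fin n)) : ℝ≥0∞ :=
  ∑ kv ∈ Ikr n k (J.sup fun j => (j : ℕ) + 1),
    ∑' mv : {mv : Fin n → ℕ // ∑ j ∈ J, (mv j + 1) = m}, zetaTerm kv mv.val

/-- The triples `(J, 𝐤, 𝐦)` which index the terms of `∑_{|J| = l} S(k, m, J)`. -/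
abbrev IsIndex {n : ℕ} (l k m : ℕ) (p : Finset (Fin n) × (Fin n → ℕ) × (Fin n → ℕ)) : Prop :=
  p.1.card = l ∧ p.2.1 ∈ Ikr n k (p.1.sup fun j => (j : ℕ) + 1) ∧ ∑ j ∈ p.1, (p.2.2 j + 1) = m

/-- The triple `(J, 𝐤, 𝐦)` described by a word. The least admissible value of `kᵢ` is `2` for the
last index and `1` for every other. -/
def toIndex {n : ℕ} (d : Fin (n + 1) → Letter) :
    Finset (Fin (n + 1)) × (Fin (n + 1) → ℕ) × (Fin (n + 1) → ℕ) :=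
  (univ.filter fun i => (d i).mem, fun i => (d i).excess + 1 + if i = Fin.last n then 1 else 0,
    fun i => (d i).part)

variable {n : ℕ}

lemma toReal_extendedS {k m : ℕ} {J : Finset (Fin n)} (h : extendedS n k m J ≠ ⊤) :
    (extendedS n k m J).toReal = S n k m J := by
  rw [extendedS, ENNReal.toReal_sum (ENNReal.sum_ne_top.1 h)]
  refine sum_congr rfl fun kv hkv => ?_
  rw [ENNReal.tsum_toReal_eq (ENNReal.ne_top_of_tsum_ne_top (ENNReal.sum_ne_top.1 h kv hkv))]
  exact tsum_congr fun mv => by simp [zetaTerm, ENNReal.toReal_prod]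

lemma mem_Ikr_succ_iff {k r : ℕ} {kv : Fin (n + 1) → ℕ} :
    kv ∈ Ikr (n + 1) k r ↔ (∀ i, 1 ≤ kv i) ∧ 2 ≤ kv (Fin.last n) ∧ ∑ i, kv i = k ∧
      ∀ i : Fin (n + 1), (i : ℕ) + 2 ≤ r → kv i = 1 := by
  have last_iff : (∀ i : Fin (n + 1), (i : ℕ) = n + 1 - 1 → 2 ≤ kv i) ↔ 2 ≤ kv (Fin.last n) :=
    ⟨fun h => h _ rfl, fun h i hi => (Fin.ext hi : i = Fin.last n) ▸ h⟩
  rw [Ikr, mem_filter, last_iff, and_iff_right_of_imp]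
  rintro ⟨-, -, rfl, -⟩
  exact Fintype.mem_piFinset.2 fun i => mem_range.2 <| Nat.lt_succ_of_le <|
    single_le_sum (fun _ _ => Nat.zero_le _) (mem_univ i)

lemma add_two_le_sup_iff (J : Finset (Fin n)) (i : Fin n) :
    (i : ℕ) + 2 ≤ J.sup (fun j => (j : ℕ) + 1) ↔ ∃ j ∈ J, i < j := by
  rw [Finset.le_sup_iff (by simp)]
  exact exists_congr fun j => and_congr_right fun _ => by omega

lemma toIndex_injective : Function.Injective (toIndex (n := n)) := by
  intro d d' h
  simp only [toIndex, Prod.mk.injEq, funext_iff, Nat.add_right_cancel_iff] at h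
  obtain ⟨mem_eq, excess_eq, part_eq⟩ := h
  have mem_iff (i : Fin (n + 1)) : (d i).mem ↔ (d' i).mem := by
    simpa using Finset.ext_iff.1 mem_eq i
  exact funext fun i => Letter.ext (Bool.eq_iff_iff.2 (mem_iff i)) (part_eq i) (excess_eq i)

lemma exists_toIndex_eq {l k m : ℕ}
    {p : Finset (Fin (n + 1)) × (Fin (n + 1) → ℕ) × (Fin (n + 1) → ℕ)} (hp : IsIndex l k m p) :
    ∃ d, toIndex d = p := by
  obtain ⟨J, kv, mv⟩ := p
  obtain ⟨-, h_kv, -⟩ := hp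
  obtain ⟨one_le, two_le, -⟩ := mem_Ikr_succ_iff.1 h_kv
  refine ⟨fun i => ⟨i ∈ J, mv i, kv i - 1 - if i = Fin.last n then 1 else 0⟩, ?_⟩
  simp only [toIndex, Prod.mk.injEq, and_true]
  refine ⟨by ext; simp, funext fun i => ?_⟩
  have : 1 ≤ kv i := one_le i
  have : 2 ≤ kv (Fin.last n) := two_le
  split_ifs with hi
  · rw [hi]
    omega
  · omega

lemma isIndex_toIndex_iff {l w m : ℕ} (d : Fin (n + 1) → Letter) :
    IsIndex l (n + 2 + w) m (toIndex d) ↔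
      IsShuffle l w m (∑ i, if (d i).mem then 0 else (d i).part + 1) d := by
  have sum_eq : ∑ i, (toIndex d).2.1 i = ∑ i, (d i).excess + (n + 2) := by
    simp [toIndex, sum_add_distrib, add_assoc]
  have excess_iff (i j : Fin (n + 1)) (hij : i < j) :
      (toIndex d).2.1 i = 1 ↔ (d i).excess = 0 := by
    simp [toIndex, (hij.trans_le (Fin.le_last j)).ne]
  rw [IsIndex, mem_Ikr_succ_iff, sum_eq]
  simp only [add_two_le_sup_iff]
  constructor
  · rintro ⟨h_card, ⟨-, -, h_sum, h_one⟩, h_mem⟩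
    refine ⟨by simpa [toIndex] using h_card, by simpa [toIndex, sum_filter] using h_mem, rfl,
      by omega, fun i j hij hj => (excess_iff i j hij).1 (h_one i ⟨j, ?_, hij⟩)⟩
    simpa [toIndex] using hj
  · rintro ⟨h_card, h_mem, -, h_sum, h_zero⟩
    refine ⟨by simpa [toIndex] using h_card, ⟨fun i => ?_, by simp [toIndex], by omega, ?_⟩,
      by simpa [toIndex, sum_filter] using h_mem⟩
    · exact Nat.le_add_right_of_le (Nat.le_add_left 1 _)
    · rintro i ⟨j, hj, hij⟩
      exact (excess_iff i j hij).2 (h_zero i j hij (by simpa [toIndex] using hj))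

lemma IsShuffle.zetaTerm_toIndex {l w A B : ℕ} {d : Fin (n + 1) → Letter}
    (h : IsShuffle l w A B d) :
    zetaTerm (toIndex d).2.1 (toIndex d).2.2 = wordTerm d * ((A + B : ℕ) : ℝ≥0∞)⁻¹ := by
  simp only [wordTerm, zetaTerm, toIndex, pow_add _ (_ + 1), prod_mul_distrib]
  congr 1
  simp [pow_ite, h.PS_eq]

lemma sum_extendedS_eq_tsum (k m l : ℕ) :
    ∑ J : Finset (Fin n) with J.card = l, extendedS n k m J =
      ∑' p : Finset (Fin n) × (Fin n → ℕ) × (Fin n → ℕ),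
        if IsIndex l k m p then zetaTerm p.2.1 p.2.2 else 0 := by
  rw [← tsum_ite_mem]
  simp only [mem_filter, mem_univ, true_and, extendedS]
  simp only [IsIndex, ite_and, ENNReal.tsum_prod', tsum_ite_const, tsum_ite_mem,
    tsum_subtype_eq_tsum_ite _ (zetaTerm _)]

theorem sum_extendedS_eq_tsum_shuffleSum (n l w m : ℕ) :
    ∑ J : Finset (Fin (n + 1)) with J.card = l, extendedS (n + 1) (n + 2 + w) m J =
      ∑' B : ℕ, shuffleSum (n + 1) l w m B * ((m + B : ℕ) : ℝ≥0∞)⁻¹ := by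
  classical
  rw [sum_extendedS_eq_tsum, ← toIndex_injective.tsum_eq fun p hp => exists_toIndex_eq
    (by_contra fun h => hp (if_neg h))]
  simp_rw [shuffleSum, ← ENNReal.tsum_mul_right]
  rw [ENNReal.tsum_comm]
  refine tsum_congr fun d => ?_
  rw [tsum_eq_single (∑ i, if (d i).mem then 0 else (d i).part + 1) fun B hB => by
    rw [if_neg fun h => hB h.sum_notMem.symm, zero_mul]]
  simp only [isIndex_toIndex_iff, ite_mul, zero_mul]
  split_ifs with h
  exacts [h.zetaTerm_toIndex, rfl]

theorem sum_extendedS (a r w x : ℕ) :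
    ∑ J : Finset (Fin (a + r + 1)) with J.card = a + 1,
        extendedS (a + r + 1) (a + r + 2 + w) (x + 1) J =
      invSucc x ^ (w + 2) *
        ∑ q ∈ Qset (a + r + 1) (x + 1) (a + 1), ∏ i, invSucc (q i) := by
  rw [sum_extendedS_eq_tsum_shuffleSum, add_right_comm a r 1]
  simp_rw [shuffleSum_succ_left, mul_assoc]
  rw [ENNReal.tsum_mul_left, ENNReal.tsum_mul_left, tsum_strictChainSum_mul_inv_add,
    strictChainSum, sum_range_strictChainSum, add_right_comm a 1 r, sum_Qset_prod, ← invSucc]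
  ring

lemma prod_invSucc_ne_top (q : Fin n → ℕ) : ∏ i, invSucc (q i) ≠ ⊤ :=
  ENNReal.prod_ne_top fun i _ => invSucc_ne_top (q i)

lemma sum_extendedS_ne_top (a r w x : ℕ) :
    ∑ J : Finset (Fin (a + r + 1)) with J.card = a + 1,
      extendedS (a + r + 1) (a + r + 2 + w) (x + 1) J ≠ ⊤ := by
  rw [sum_extendedS]
  exact ENNReal.mul_ne_top (ENNReal.pow_ne_top (invSucc_ne_top x))
    (ENNReal.sum_ne_top.2 fun q _ => prod_invSucc_ne_top q)

end Evaluation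

/-- Proposition 3.2 of the paper: for `1 ≤ l ≤ n`,
`∑_{|J|=l} S(k,m,J) = (1/m^{k-n+1}) ∑_{𝐪∈Q_l} 1/(q₁q₂⋯q_{n-1})`. -/
theorem sum_S_fixed_card (n k m l : ℕ) (hn : 1 ≤ n) (hk : n + 1 ≤ k) (hm : 1 ≤ m)
    (hl : 1 ≤ l) (hln : l ≤ n) :
    ∑ J ∈ (Finset.univ : Finset (Fin n)).powerset.filter (fun J => J.card = l),
      S n k m J
    = ((m : ℝ) ^ (k - n + 1))⁻¹ *
        ∑ q ∈ Qset n m l, ∏ i : Fin (n - 1), ((q i : ℝ) + 1)⁻¹ := by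
  obtain ⟨a, rfl⟩ := Nat.exists_eq_add_of_le' hl
  obtain ⟨r, rfl⟩ := Nat.exists_eq_add_of_le hln
  rw [add_right_comm a 1 r] at hk ⊢
  obtain ⟨w, rfl⟩ := Nat.exists_eq_add_of_le hk
  obtain ⟨x, rfl⟩ := Nat.exists_eq_add_of_le' hm
  have summand_ne_top := ENNReal.sum_ne_top.1 (sum_extendedS_ne_top a r w x)
  calc _
    _ = (∑ J : Finset (Fin (a + r + 1)) with J.card = a + 1,
          extendedS (a + r + 1) (a + r + 2 + w) (x + 1) J).toReal := by
      rw [powerset_univ, ENNReal.toReal_sum summand_ne_top]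
      exact sum_congr rfl fun J hJ => (toReal_extendedS (summand_ne_top J hJ)).symm
    _ = (invSucc x ^ (w + 2) *
          ∑ q ∈ Qset (a + r + 1) (x + 1) (a + 1), ∏ i, invSucc (q i)).toReal := by
      rw [sum_extendedS]
    _ = _ := by
      rw [ENNReal.toReal_mul, ENNReal.toReal_sum fun q _ => prod_invSucc_ne_top q]
      simp only [ENNReal.toReal_prod, ENNReal.toReal_pow, toReal_invSucc]
      rw [show a + r + 1 + 1 + w - (a + r + 1) + 1 = w + 2 by omega, inv_pow, Nat.cast_succ]
end

section
/- Let n, m be positive integers. For 1 ≤ l ≤ n, let Q_l be the set of tuples (q₁,…,q_{n−1}) of positive integers with m > q₁ > ⋯ > q_{l−1} ≥ 1 and 1 ≤ q_l ≤ ⋯ ≤ q_{n−1} ≤ m. Then 1/m^{n−1} = Σ_{l=1}^{n} (−1)^{l−1} Σ_{(q₁,…,q_{n−1})∈Q_l} 1/(q₁ q₂ ⋯ q_{n−1}). -/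
open Finset

/-!
Prefix `(q₁, …, q_{n-1})` with `q₀ = m`. Membership in `Q_l` then says that the extended word
strictly decreases on positions `0, …, l - 1` and weakly increases on positions `l, …, n - 1`.
For an arbitrary word `w`, the alternating sum over all such cut positions is `1` if `w` is monotone
and `0` otherwise: writing `w = a :: v`, the cut after `a` contributes `1` exactly if `v` is
monotone, and by induction the later cuts contribute `-1` exactly if `v` is monotone and `v₀ < a`.
A monotone word starting with its largest possible letter `m` is constant.
-/

section FallsThenRises

variable {α : Type*} {n : ℕ}

/-- The word `w` strictly decreases up to and including position `k` and weakly increases after it;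
the letters in positions `k` and `k + 1` are not compared. -/
def FallsThenRises [Preorder α] (w : Fin (n + 1) → α) (k : Fin (n + 1)) : Prop :=
  StrictAntiOn w (Set.Iic k) ∧ MonotoneOn w (Set.Ioi k)

lemma strictAntiOn_vecCons_Iic [Preorder α] {a : α} {v : Fin n → α} {k : Fin (n + 1)} :
    StrictAntiOn (Matrix.vecCons a v) (Set.Iic k) ↔
      (∀ i, i.succ ≤ k → v i < a) ∧ StrictAntiOn v (Fin.succ ⁻¹' Set.Iic k) := by
  constructor
  · intro h
    exact ⟨fun i hi => h (Fin.zero_le k) hi i.succ_pos,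
      fun i hi j hj hij => h hi hj (Fin.succ_lt_succ_iff.2 hij)⟩
  · rintro ⟨ha, hv⟩ i hi j hj hij
    cases j using Fin.cases with
    | zero => exact absurd hij (Fin.not_lt_zero i)
    | succ j =>
      cases i using Fin.cases with
      | zero => exact ha j hj
      | succ i => exact hv hi hj (Fin.succ_lt_succ_iff.1 hij)

lemma monotoneOn_vecCons_Ioi [Preorder α] {a : α} {v : Fin n → α} {k : Fin (n + 1)} :
    MonotoneOn (Matrix.vecCons a v) (Set.Ioi k) ↔ MonotoneOn v (Fin.succ ⁻¹' Set.Ioi k) := by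
  constructor
  · exact fun h i hi j hj hij => h hi hj (Fin.succ_le_succ_iff.2 hij)
  · intro h i hi j hj hij
    obtain ⟨i, rfl⟩ := Fin.exists_succ_eq.2 (Fin.ne_zero_of_lt hi)
    obtain ⟨j, rfl⟩ := Fin.exists_succ_eq.2 (Fin.ne_zero_of_lt hj)
    exact h hi hj (Fin.succ_le_succ_iff.1 hij)

lemma fallsThenRises_vecCons_zero [Preorder α] {a : α} {v : Fin n → α} :
    FallsThenRises (Matrix.vecCons a v) 0 ↔ Monotone v := by
  have hpos : Fin.succ ⁻¹' Set.Ioi (0 : Fin (n + 1)) = Set.univ :=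
    Set.eq_univ_of_forall fun i => i.succ_pos
  have hzero : StrictAntiOn (Matrix.vecCons a v) (Set.Iic 0) :=
    (Set.Iic_bot (α := Fin (n + 1)) ▸ Set.subsingleton_singleton).strictAntiOn _
  rw [FallsThenRises, monotoneOn_vecCons_Ioi, hpos, monotoneOn_univ, and_iff_right hzero]

lemma fallsThenRises_vecCons_succ [Preorder α] {a : α} {v : Fin (n + 1) → α} {k : Fin (n + 1)} :
    FallsThenRises (Matrix.vecCons a v) k.succ ↔ v 0 < a ∧ FallsThenRises v k := by
  have hfirst (hv : StrictAntiOn v (Set.Iic k)) : (∀ i, i.succ ≤ k.succ → v i < a) ↔ v 0 < a := by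
    refine ⟨fun h => h 0 (Fin.succ_le_succ_iff.2 (Fin.zero_le k)), fun h i hi => ?_⟩
    exact (hv.antitoneOn (Fin.zero_le k) (Fin.succ_le_succ_iff.1 hi) (Fin.zero_le i)).trans_lt h
  rw [FallsThenRises, FallsThenRises, strictAntiOn_vecCons_Iic, monotoneOn_vecCons_Ioi,
    Fin.preimage_succ_Iic_succ, Fin.preimage_succ_Ioi_succ, and_congr_left hfirst, and_assoc]

lemma monotone_vecCons_iff_eq_const [PartialOrder α] {b : α} {v : Fin n → α} (hv : ∀ i, v i ≤ b) :
    Monotone (Matrix.vecCons b v) ↔ v = fun _ => b := by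
  constructor
  · exact fun h => funext fun i => (hv i).antisymm (h (Fin.zero_le i.succ))
  · rintro rfl i j -
    cases i using Fin.cases <;> cases j using Fin.cases <;> exact le_rfl

open scoped Classical in
theorem sum_neg_one_pow_fallsThenRises [LinearOrder α] (w : Fin (n + 1) → α) :
    ∑ k with FallsThenRises w k, (-1 : ℤ) ^ (k : ℕ) = if Monotone w then 1 else 0 := by
  induction n with
  | zero =>
    have : Subsingleton (Fin (0 + 1)) := Fin.subsingleton_one
    have hmono : Monotone w := Subsingleton.monotone w
    have hw : FallsThenRises w 0 :=
      ⟨Set.subsingleton_of_subsingleton.strictAntiOn w, hmono.monotoneOn _⟩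
    rw [sum_filter, Fin.sum_univ_succ, if_pos hw, if_pos hmono]
    simp
  | succ n ih =>
    obtain ⟨a, v, rfl⟩ : ∃ a v, w = Matrix.vecCons a v := ⟨_, _, (Matrix.cons_head_tail w).symm⟩
    have htail : ∑ k, (if v 0 < a ∧ FallsThenRises v k then (-1 : ℤ) ^ (k.succ : ℕ) else 0) =
        -if v 0 < a ∧ Monotone v then 1 else 0 := by
      by_cases hva : v 0 < a
      · simp only [hva, true_and, ← ih v, sum_filter, ← sum_neg_distrib, Fin.val_succ, pow_succ,
          mul_neg_one, neg_ite, neg_zero]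
      · simp [hva]
    rw [sum_filter, Fin.sum_univ_succ]
    simp only [fallsThenRises_vecCons_zero, fallsThenRises_vecCons_succ, htail, monotone_vecCons]
    by_cases hva : v 0 < a
    · simp [hva]
    · simp [hva, not_lt.1 hva]

open scoped Classical in
theorem sum_neg_one_pow_smul_sum_fallsThenRises_vecCons [LinearOrder α] {G : Type*} [AddCommGroup G]
    {s : Finset α} {b : α} (hb : IsGreatest (s : Set α) b) (f : (Fin n → α) → G) :
    ∑ k : Fin (n + 1), (-1 : ℤ) ^ (k : ℕ) •
        ∑ q ∈ Fintype.piFinset (fun _ => s) with FallsThenRises (Matrix.vecCons b q) k, f q =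
      f fun _ => b := by
  have hweight : ∀ q ∈ Fintype.piFinset (fun _ : Fin n => s),
      (∑ k with FallsThenRises (Matrix.vecCons b q) k, (-1 : ℤ) ^ (k : ℕ)) • f q =
        if q = fun _ => b then f q else 0 := by
    intro q hq
    have hqb (i : Fin n) : q i ≤ b := hb.2 (Fintype.mem_piFinset.1 hq i)
    simp only [sum_neg_one_pow_fallsThenRises, monotone_vecCons_iff_eq_const hqb, ite_smul,
      one_smul, zero_smul]
  have hconst : (fun _ => b) ∈ Fintype.piFinset (fun _ : Fin n => s) :=
    Fintype.mem_piFinset.2 fun _ => hb.1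
  calc
    _ = ∑ q ∈ Fintype.piFinset (fun _ : Fin n => s),
          (∑ k with FallsThenRises (Matrix.vecCons b q) k, (-1 : ℤ) ^ (k : ℕ)) • f q := by
      simp only [sum_filter, smul_sum, sum_smul, smul_ite, ite_smul, smul_zero, zero_smul]
      exact sum_comm
    _ = f fun _ => b := by rw [sum_congr rfl hweight, sum_ite_eq', if_pos hconst]

end FallsThenRises

open scoped Classical in
lemma Qset_eq_filter_fallsThenRises (n m : ℕ) (k : Fin (n + 1)) :
    Qset (n + 1) (m + 1) (k + 1) =
      {q ∈ Fintype.piFinset fun _ : Fin n => range (m + 1) |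
        FallsThenRises (Matrix.vecCons m q) k} := by
  refine filter_congr fun q hq => ?_
  have hqm (i : Fin n) : q i + 1 ≤ m + 1 := mem_range.1 (Fintype.mem_piFinset.1 hq i)
  rw [FallsThenRises, strictAntiOn_vecCons_Iic, monotoneOn_vecCons_Ioi]
  constructor
  · rintro ⟨hlt, hanti, hmono, -⟩
    exact ⟨⟨fun i hi => Nat.lt_of_succ_lt_succ (hlt i hi), fun i _ j hj hij => hanti i j hij hj⟩,
      fun i hi j _ hij => hmono i j (Nat.le_of_lt_succ hi) hij⟩
  · rintro ⟨⟨hlt, hanti⟩, hmono⟩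
    exact ⟨fun i hi => Nat.succ_lt_succ (hlt i hi),
      fun i j hij hj => hanti (hij.trans hj) hj hij,
      fun i j hi hij => hmono (Nat.lt_succ_of_le hi) (Nat.lt_succ_of_le (hi.trans hij)) hij,
      fun i _ => hqm i⟩

theorem inclusion_exclusion_Q_general {G : Type*} [AddCommGroup G] (n m : ℕ) (hn : 1 ≤ n)
    (hm : 1 ≤ m) (f : (Fin (n - 1) → ℕ) → G) :
    f (fun _ => m - 1) = ∑ l ∈ Icc 1 n, (-1 : ℤ) ^ (l - 1) • ∑ q ∈ Qset n m l, f q := by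
  obtain ⟨n, rfl⟩ := Nat.exists_eq_add_of_le' hn
  obtain ⟨m, rfl⟩ := Nat.exists_eq_add_of_le' hm
  have hgreatest : IsGreatest (range (m + 1) : Set ℕ) m :=
    ⟨by simp, fun i hi => Nat.lt_succ_iff.1 (mem_range.1 hi)⟩
  rw [← Ico_add_one_right_eq_Icc, sum_Ico_eq_sum_range, sum_range]
  simp only [add_comm 1, Nat.add_sub_cancel, Qset_eq_filter_fallsThenRises]
  exact (sum_neg_one_pow_smul_sum_fallsThenRises_vecCons hgreatest f).symm

/-- Equation (3.2) of the paper: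
`1/m^{n-1} = ∑_{l=1}^n (-1)^{l-1} ∑_{𝐪∈Q_l} 1/(q₁q₂⋯q_{n-1})`. -/
theorem inclusion_exclusion_Q (n m : ℕ) (hn : 1 ≤ n) (hm : 1 ≤ m) :
    (1 : ℝ) / (m : ℝ) ^ (n - 1)
    = ∑ l ∈ Finset.Icc 1 n, (-1 : ℝ) ^ (l - 1) *
        ∑ q ∈ Qset n m l, ∏ i : Fin (n - 1), ((q i : ℝ) + 1)⁻¹ := by
  have h := inclusion_exclusion_Q_general n m hn hm fun q => ∏ i, ((q i : ℝ) + 1)⁻¹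
  simpa [Nat.cast_sub hm] using h
end

section
/- Let n ≥ 1 be an integer, let m be a positive integer, let 1 ≤ l ≤ n, and let p₁,…,p_{n−1} be positive integers with p₁+⋯+p_{l−1} < m. Then Σ_{σ∈Sh(l,r)} 1/(p_{σ⁻¹(1)}(p_{σ⁻¹(1)}+p_{σ⁻¹(2)})⋯(p_{σ⁻¹(1)}+⋯+p_{σ⁻¹(r−1)})) = [1/(p₁(p₁+p₂)⋯(p₁+⋯+p_{l−1}))] · [1/(p_l(p_l+p_{l+1})⋯(p_l+⋯+p_{r−1}))] for every r with l ≤ r ≤ n. -/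
open Finset
open scoped Classical

/-!
A shuffle of two blocks is the inverse of a linear extension of the disjoint sum of two chains, so
the identity is an instance of a weighted hook length formula for forests. Write `v(S)` for the
total weight of `S`. Deleting the last element of a linear extension of `α`, which is a maximal
element `m`, removes exactly the factor `1 / v(α)`, and leaves a linear extension of `α \ {m}`. By
induction the linear extensions ending in `m` contribute `v(≤ m) / v(α) * ∏ₓ 1 / v(≤ x)`. In a
forest every element lies below exactly one maximal element, hence `∑ₘ v(≤ m) = v(α)` and the
contributions add up to `∏ₓ 1 / v(≤ x)`.
-/

section InvPrefixProd

variable {K : Type*} [Semifield K]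

/-- The product `1 / (u₀ (u₀ + u₁) ⋯ (u₀ + ⋯ + uₙ₋₁))` of the reciprocals of the partial sums of
a finite sequence `u`. It is only meaningful when no partial sum vanishes. -/
def invPrefixProd {n : ℕ} (u : Fin n → K) : K :=
  ∏ j, (∑ i ∈ Iic j, u i)⁻¹

lemma invPrefixProd_succ {n : ℕ} (u : Fin (n + 1) → K) :
    invPrefixProd u = invPrefixProd (fun i : Fin n => u i.castSucc) * (∑ i, u i)⁻¹ := by
  have Iic_last : Iic (Fin.last n) = univ := Iic_top
  simp only [invPrefixProd, Fin.prod_univ_castSucc, Fin.sum_Iic_castSucc, Iic_last]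

end InvPrefixProd

section Enumeration

variable {α : Type*} {n : ℕ}

/-- An enumeration of `α` by `Fin (n + 1)` amounts to its last value `m` together with an
enumeration of the complement of `m` by `Fin n`. -/
noncomputable def snocEnumeration :
    (Σ m : α, (Fin n ≃ {x // x ≠ m})) ≃ (Fin (n + 1) ≃ α) :=
  ((Equiv.sigmaCongrRight fun m => (Equiv.optionSubtype m).symm).trans
    (Equiv.sigmaFiberEquiv fun e : Option (Fin n) ≃ α => e none)).trans
    (finSuccEquivLast.symm.equivCongr (Equiv.refl α))

@[simp]
lemma snocEnumeration_last (m : α) (e : Fin n ≃ {x // x ≠ m}) :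
    snocEnumeration ⟨m, e⟩ (Fin.last n) = m := by
  simp [snocEnumeration, Equiv.sigmaFiberEquiv]

@[simp]
lemma snocEnumeration_castSucc (m : α) (e : Fin n ≃ {x // x ≠ m}) (i : Fin n) :
    snocEnumeration ⟨m, e⟩ i.castSucc = e i := by
  simp [snocEnumeration, Equiv.sigmaFiberEquiv]

end Enumeration

section LinearExtension

variable {α : Type*} [PartialOrder α] {n : ℕ}

/-- An enumeration of a partially ordered set is a linear extension if it lists every element
after all the smaller ones. -/
def IsLinearExtension (e : Fin n ≃ α) : Prop :=
  ∀ ⦃i j⦄, e i ≤ e j → i ≤ j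

lemma isLinearExtension_snocEnumeration (m : α) (e : Fin n ≃ {x // x ≠ m}) :
    IsLinearExtension (snocEnumeration ⟨m, e⟩) ↔ IsMax m ∧ IsLinearExtension e := by
  constructor
  · intro h
    refine ⟨fun x hmx => ?_, fun i j hij => ?_⟩
    · obtain ⟨j, rfl⟩ := (snocEnumeration ⟨m, e⟩).surjective x
      have hj : Fin.last n ≤ j := h (by simpa using hmx)
      simp [Fin.last_le_iff.mp hj]
    · simpa using @h i.castSucc j.castSucc (by simpa using hij)
  · rintro ⟨hm, he⟩ i j hij
    induction j using Fin.lastCases with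
    | last => exact Fin.le_last i
    | cast j =>
      induction i using Fin.lastCases with
      | last =>
        rw [snocEnumeration_last, snocEnumeration_castSucc] at hij
        exact absurd (hm.eq_of_le hij).symm (e j).2
      | cast i =>
        rw [snocEnumeration_castSucc, snocEnumeration_castSucc] at hij
        exact Fin.castSucc_le_castSucc_iff.mpr (he hij)

variable {K : Type*} [Semifield K] [Fintype α] [DecidableEq α]

/-- The sum of `1 / (v x₀ (v x₀ + v x₁) ⋯ (v x₀ + ⋯ + v xₙ₋₁))` over the linear extensions
`x₀, …, xₙ₋₁` of `α`; it is `0` unless `α` has `n` elements. -/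
noncomputable def linearExtensionSum (n : ℕ) (v : α → K) : K :=
  ∑ e : Fin n ≃ α with IsLinearExtension e, invPrefixProd (v ∘ e)

lemma linearExtensionSum_zero [IsEmpty α] (v : α → K) : linearExtensionSum 0 v = 1 := by
  have isLinearExtension (e : Fin 0 ≃ α) : IsLinearExtension e := fun i => i.elim0
  simp [linearExtensionSum, isLinearExtension, invPrefixProd,
    Fintype.card_equiv (Equiv.equivOfIsEmpty (Fin 0) α)]

lemma linearExtensionSum_succ (v : α → K) :
    linearExtensionSum (n + 1) v =
      (∑ m : α with IsMax m, linearExtensionSum n fun x : {x // x ≠ m} => v x) * (∑ x, v x)⁻¹ := by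
  have invPrefixProd_snoc (m : α) (e : Fin n ≃ {x // x ≠ m}) :
      invPrefixProd (v ∘ snocEnumeration ⟨m, e⟩) =
        invPrefixProd ((fun x : {x // x ≠ m} => v x) ∘ e) * (∑ x, v x)⁻¹ := by
    rw [invPrefixProd_succ]
    simp only [Function.comp_apply, snocEnumeration_castSucc, Equiv.sum_comp, Function.comp_def]
  simp only [linearExtensionSum, sum_filter]
  rw [← snocEnumeration.sum_comp, Fintype.sum_sigma, sum_mul]
  refine Fintype.sum_congr _ _ fun m => ?_
  simp only [isLinearExtension_snocEnumeration, invPrefixProd_snoc, ite_and, ite_mul, zero_mul,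
    sum_mul]
  split_ifs with hm <;> simp

end LinearExtension

section Forest

variable {α M : Type*} [PartialOrder α] [AddCommMonoid M]

/-- The weights of `α` are nondegenerate if no nonempty lower set has total weight `0`. This is
what keeps every denominator in `linearExtensionSum` away from `0`. -/
def LowerSumsNeZero (v : α → M) : Prop :=
  ∀ s : Finset α, s.Nonempty → IsLowerSet (s : Set α) → ∑ x ∈ s, v x ≠ 0

lemma LowerSumsNeZero.subtype_ne {v : α → M} (hv : LowerSumsNeZero v) {m : α} (hm : IsMax m) :
    LowerSumsNeZero fun x : {x // x ≠ m} => v x := by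
  intro s hs hlower
  have isLowerSet_map : IsLowerSet (s.map (Function.Embedding.subtype (· ≠ m)) : Set α) := by
    intro x y hyx hx
    obtain ⟨x, hxs, rfl⟩ := mem_map.mp (mem_coe.mp hx)
    have hym : y ≠ m := by
      rintro rfl
      exact x.2 (hm.eq_of_le hyx).symm
    exact mem_coe.mpr (mem_map.mpr ⟨⟨y, hym⟩, hlower (show ⟨y, hym⟩ ≤ x from hyx) hxs, rfl⟩)
  simpa using hv _ (hs.map (f := Function.Embedding.subtype _)) isLowerSet_map

variable [Fintype α]

/-- The total weight of the principal lower set below `x`, the weighted analogue of the hook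
length of `x` in a forest. -/
noncomputable def lowerSum (v : α → M) (x : α) : M :=
  ∑ y with y ≤ x, v y

lemma sum_lowerSum_isMax (hforest : ∀ x : α, IsChain (· ≤ ·) (Set.Ici x)) (v : α → M) :
    ∑ m with IsMax m, lowerSum v m = ∑ x, v x := by
  have exists_isMax_ge_eq_singleton (x : α) : ∃ m, ({m | IsMax m ∧ x ≤ m} : Finset α) = {m} := by
    obtain ⟨m, hxm, hm⟩ := Finite.exists_le_maximal (p := fun _ : α => True) (a := x) trivial
    rw [maximal_true] at hm
    refine ⟨m, eq_singleton_iff_unique_mem.mpr ⟨by simp [hm, hxm], fun m' hm' => ?_⟩⟩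
    obtain ⟨hmax', hxm'⟩ := (mem_filter_univ _).mp hm'
    rcases (hforest x).total hxm' hxm with h | h
    · exact hmax'.eq_of_le h
    · exact (hm.eq_of_le h).symm
  simp only [lowerSum]
  rw [sum_comm' (t' := univ) (s' := fun x => {m | IsMax m ∧ x ≤ m}) (by simp [and_comm])]
  refine Fintype.sum_congr _ _ fun x => ?_
  obtain ⟨m, hm⟩ := exists_isMax_ge_eq_singleton x
  rw [hm, sum_singleton]

lemma lowerSum_subtype_ne [DecidableEq α] {m : α} (hm : IsMax m) (v : α → M) (x : {x // x ≠ m}) :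
    lowerSum (fun y : {x // x ≠ m} => v y) x = lowerSum v x := by
  have ne_of_le {y : α} (hy : y ≤ x) : y ≠ m := by
    rintro rfl
    exact x.2 (hm.eq_of_le hy).symm
  refine sum_bij (fun y _ => y) (by simp) (by simp [Subtype.ext_iff]) (fun y hy => ?_) (by simp)
  have hyx : y ≤ x := (mem_filter_univ y).mp hy
  exact ⟨⟨y, ne_of_le hyx⟩, (mem_filter_univ _).mpr hyx, rfl⟩

lemma LowerSumsNeZero.lowerSum_ne_zero {v : α → M} (hv : LowerSumsNeZero v) (x : α) :
    lowerSum v x ≠ 0 :=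
  hv _ ⟨x, by simp⟩ fun y z hzy hy => by simpa using hzy.trans (by simpa using hy)

/-- For constant weights `v = 1` this is Knuth's hook length formula for forests. -/
theorem linearExtensionSum_eq_prod_inv_lowerSum [DecidableEq α] {K : Type*} [Semifield K] {n : ℕ}
    (hn : Fintype.card α = n) (hforest : ∀ x : α, IsChain (· ≤ ·) (Set.Ici x))
    {v : α → K} (hv : LowerSumsNeZero v) :
    linearExtensionSum n v = ∏ x, (lowerSum v x)⁻¹ := by
  induction n generalizing α with
  | zero =>
    have : IsEmpty α := Fintype.card_eq_zero_iff.mp hn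
    rw [linearExtensionSum_zero, Fintype.prod_empty]
  | succ n ih =>
    have linearExtensionSum_ne {m : α} (hm : IsMax m) :
        linearExtensionSum n (fun x : {x // x ≠ m} => v x) =
          lowerSum v m * ∏ x, (lowerSum v x)⁻¹ := by
      have hforest_ne (x : {x // x ≠ m}) : IsChain (· ≤ ·) (Set.Ici x) :=
        fun y hy z hz hne => hforest x hy hz (Subtype.coe_injective.ne hne)
      rw [ih (α := {x // x ≠ m}) (by simp [hn]) hforest_ne (hv.subtype_ne hm),
        Fintype.prod_eq_mul_prod_subtype_ne _ m, mul_inv_cancel_left₀ (hv.lowerSum_ne_zero m)]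
      simp only [lowerSum_subtype_ne hm]
    have sum_ne_zero : ∑ x, v x ≠ 0 :=
      hv univ (card_pos.mp (by simp [hn])) (by simpa using isLowerSet_univ)
    calc linearExtensionSum (n + 1) v
        = (∑ m with IsMax m, lowerSum v m * ∏ x, (lowerSum v x)⁻¹) * (∑ x, v x)⁻¹ := by
          rw [linearExtensionSum_succ]
          congr 1
          exact sum_congr rfl fun m hm => linearExtensionSum_ne ((mem_filter_univ m).mp hm)
      _ = (∑ x, v x) * (∏ x, (lowerSum v x)⁻¹) * (∑ x, v x)⁻¹ := by
          rw [← sum_mul, sum_lowerSum_isMax hforest]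
      _ = ∏ x, (lowerSum v x)⁻¹ := by
          rw [mul_comm (∑ x, v x), mul_inv_cancel_right₀ sum_ne_zero]

end Forest

section Shuffle

variable {a b : ℕ} {K : Type*} [Semifield K]

/-- The set `Sh(a + 1, c + 1)` of shuffles of `{1, …, a}` and `{a + 1, …, c}`, with the underlying
set `{1, …, c}` encoded as `Fin c`. -/
def shuffles (a c : ℕ) : Finset (Equiv.Perm (Fin c)) :=
  univ.filter fun σ =>
    (∀ i j : Fin c, i < j → (j : ℕ) < a → σ i < σ j) ∧
    (∀ i j : Fin c, i < j → a ≤ (i : ℕ) → σ i < σ j)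

lemma finSumFinEquiv_symm_le_iff {i j : Fin (a + b)} :
    finSumFinEquiv.symm i ≤ finSumFinEquiv.symm j ↔ i ≤ j ∧ ((j : ℕ) < a ∨ a ≤ (i : ℕ)) := by
  induction i using Fin.addCases with
  | left i | right i =>
    induction j using Fin.addCases with
    | left j | right j =>
      have hi := i.isLt
      have hj := j.isLt
      simp only [finSumFinEquiv_symm_apply_castAdd, finSumFinEquiv_symm_apply_natAdd,
        Sum.inl_le_inl_iff, Sum.inr_le_inr_iff, Sum.not_inl_le_inr, Sum.not_inr_le_inl,
        Fin.le_def, Fin.val_castAdd, Fin.val_natAdd, false_iff]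
      omega

lemma isLinearExtension_iff_mem_shuffles (σ : Equiv.Perm (Fin (a + b))) :
    IsLinearExtension (σ.symm.trans finSumFinEquiv.symm) ↔ σ ∈ shuffles a (a + b) := by
  rw [shuffles, mem_filter_univ]
  have lt_iff_le {i j : Fin (a + b)} (hij : i < j) : σ i < σ j ↔ σ i ≤ σ j :=
    (σ.injective.ne hij.ne).le_iff_lt.symm
  constructor
  · intro h
    have le_of_block {i j : Fin (a + b)} (hij : i < j) (hblock : (j : ℕ) < a ∨ a ≤ (i : ℕ)) :
        σ i < σ j :=
      (lt_iff_le hij).mpr <| h <| by simpa [finSumFinEquiv_symm_le_iff] using ⟨hij.le, hblock⟩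
    exact ⟨fun i j hij hj => le_of_block hij (.inl hj), fun i j hij hi => le_of_block hij (.inr hi)⟩
  · rintro ⟨hleft, hright⟩ i j hij
    obtain ⟨i, rfl⟩ := σ.surjective i
    obtain ⟨j, rfl⟩ := σ.surjective j
    simp only [Equiv.trans_apply, Equiv.symm_apply_apply, finSumFinEquiv_symm_le_iff] at hij
    obtain ⟨hle, hblock⟩ := hij
    rcases hle.eq_or_lt with rfl | hlt
    · exact le_rfl
    · exact (hblock.elim (hleft i j hlt) (hright i j hlt)).le

lemma sum_shuffles_eq_linearExtensionSum (u : Fin (a + b) → K) :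
    ∑ σ ∈ shuffles a (a + b), invPrefixProd (u ∘ σ.symm) =
      linearExtensionSum (a + b) (u ∘ finSumFinEquiv) := by
  refine sum_equiv ((Equiv.symmEquiv _ _).trans ((Equiv.refl _).equivCongr finSumFinEquiv.symm))
    (fun σ => ?_) fun σ _ => ?_
  · rw [mem_filter_univ, ← isLinearExtension_iff_mem_shuffles]
    rfl
  · congr 1
    ext i
    simp

lemma linearExtensionSum_fin_sum_fin {v : Fin a ⊕ Fin b → K} (hv : LowerSumsNeZero v) :
    linearExtensionSum (a + b) v =
      invPrefixProd (v ∘ Sum.inl) * invPrefixProd (v ∘ Sum.inr) := by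
  have isChain_Ici (x : Fin a ⊕ Fin b) : IsChain (· ≤ ·) (Set.Ici x) := by
    rcases x with x | x <;> rintro (y | y) hy (z | z) hz - <;>
      simp_all [Set.mem_Ici, le_total]
  have lowerSum_inl (j : Fin a) : lowerSum v (.inl j) = ∑ i ∈ Iic j, v (.inl i) := by
    simp [lowerSum, sum_filter, Fintype.sum_sum_type, ← filter_ge_eq_Iic]
  have lowerSum_inr (j : Fin b) : lowerSum v (.inr j) = ∑ i ∈ Iic j, v (.inr i) := by
    simp [lowerSum, sum_filter, Fintype.sum_sum_type, ← filter_ge_eq_Iic]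
  rw [linearExtensionSum_eq_prod_inv_lowerSum (by simp) isChain_Ici hv, Fintype.prod_sum_type]
  simp only [lowerSum_inl, lowerSum_inr, invPrefixProd, Function.comp_apply]

lemma invPrefixProd_comp_embedding {β : Type*} {n : ℕ} (φ : Fin n ↪ β) {s : Finset β}
    {t : β → Finset β} (hs : univ.map φ = s) (ht : ∀ j, (Iic j).map φ = t (φ j)) (q : β → K) :
    invPrefixProd (q ∘ φ) = ∏ j ∈ s, (∑ i ∈ t j, q i)⁻¹ := by
  simp only [invPrefixProd, ← hs, prod_map, ← ht, sum_map, Function.comp_apply]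

lemma invPrefixProd_comp_castLE {N : ℕ} (h : a ≤ N) (q : Fin N → K) :
    invPrefixProd (q ∘ Fin.castLE h) =
      ∏ j ∈ univ.filter (fun j : Fin N => (j : ℕ) < a),
        (∑ i ∈ univ.filter (fun i : Fin N => i ≤ j), q i)⁻¹ := by
  refine invPrefixProd_comp_embedding (Fin.castLEEmb h) ?_ (fun j => ?_) q
  · ext x
    simp [Fin.ext_iff, Fin.exists_iff]
  · rw [Fin.map_castLEEmb_Iic, filter_ge_eq_Iic]
    rfl

lemma invPrefixProd_comp_natAdd {N : ℕ} (h : a + b ≤ N) (q : Fin N → K) :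
    invPrefixProd (q ∘ Fin.castLE h ∘ Fin.natAdd a) =
      ∏ j ∈ univ.filter (fun j : Fin N => a ≤ (j : ℕ) ∧ (j : ℕ) < a + b),
        (∑ i ∈ univ.filter (fun i : Fin N => a ≤ (i : ℕ) ∧ i ≤ j), q i)⁻¹ := by
  have exists_eq_of_le_of_lt {x : Fin N} (hax : a ≤ (x : ℕ)) (hxb : (x : ℕ) < a + b) :
      ∃ i : Fin b, Fin.castLE h (Fin.natAdd a i) = x :=
    ⟨⟨x - a, by omega⟩, Fin.ext (Nat.add_sub_cancel' hax)⟩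
  refine invPrefixProd_comp_embedding ((Fin.natAddEmb a).trans (Fin.castLEEmb h)) ?_
    (fun j => ?_) q
  · ext x
    simp only [mem_map, mem_univ, true_and, mem_filter_univ]
    constructor
    · rintro ⟨i, rfl⟩
      exact ⟨Nat.le_add_right a i, Nat.add_lt_add_left i.2 a⟩
    · exact fun hx => exists_eq_of_le_of_lt hx.1 hx.2
  · ext x
    simp only [mem_map, mem_Iic, mem_filter_univ]
    constructor
    · rintro ⟨i, hij, rfl⟩
      exact ⟨Nat.le_add_right a i, Nat.add_le_add_left hij a⟩
    · rintro ⟨hax, hxj⟩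
      obtain ⟨i, rfl⟩ := exists_eq_of_le_of_lt hax
        (lt_of_le_of_lt (Fin.le_def.mp hxj) (Nat.add_lt_add_left j.2 a))
      exact ⟨i, Nat.le_of_add_le_add_left hxj, rfl⟩

end Shuffle

/-- The sets `s` in `hq` are the unions of an initial segment of `{i | i < a}` and an initial
segment of `{i | a ≤ i}`; their weights are the denominators that occur while shuffling. -/
theorem shuffle_identity_p_general {K : Type*} [Semifield K] {N a c : ℕ} (hac : a ≤ c)
    (hcN : c ≤ N) (q : Fin N → K)
    (hq : ∀ s : Finset (Fin c), s.Nonempty →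
      (∀ i j : Fin c, i ≤ j → ((j : ℕ) < a ∨ a ≤ (i : ℕ)) → j ∈ s → i ∈ s) →
      ∑ i ∈ s, q (Fin.castLE hcN i) ≠ 0) :
    ∑ σ ∈ shuffles a c, ∏ j : Fin c, (∑ i ∈ Iic j, q (Fin.castLE hcN (σ.symm i)))⁻¹ =
    (∏ j ∈ univ.filter (fun j : Fin N => (j : ℕ) < a),
        (∑ i ∈ univ.filter (fun i : Fin N => i ≤ j), q i)⁻¹) *
      ∏ j ∈ univ.filter (fun j : Fin N => a ≤ (j : ℕ) ∧ (j : ℕ) < c),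
        (∑ i ∈ univ.filter (fun i : Fin N => a ≤ (i : ℕ) ∧ i ≤ j), q i)⁻¹ := by
  obtain ⟨b, rfl⟩ := exists_add_of_le hac
  have hv : LowerSumsNeZero ((q ∘ Fin.castLE hcN) ∘ finSumFinEquiv) := by
    intro s hs hlower
    have := hq (s.map finSumFinEquiv.toEmbedding) hs.map fun i j hij hblock hj => ?_
    · simpa using this
    · rw [mem_map_equiv] at hj ⊢
      exact hlower (finSumFinEquiv_symm_le_iff.mpr ⟨hij, hblock⟩) hj
  have inl_eq : ((q ∘ Fin.castLE hcN) ∘ finSumFinEquiv) ∘ Sum.inl =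
      q ∘ Fin.castLE (hac.trans hcN) := by
    ext i
    rw [Function.comp_apply, Function.comp_apply, finSumFinEquiv_apply_left]
    rfl
  have inr_eq : ((q ∘ Fin.castLE hcN) ∘ finSumFinEquiv (m := a)) ∘ Sum.inr =
      q ∘ Fin.castLE hcN ∘ Fin.natAdd a := by
    ext i
    simp
  rw [← invPrefixProd_comp_castLE (hac.trans hcN), ← invPrefixProd_comp_natAdd hcN, ← inl_eq,
    ← inr_eq, ← linearExtensionSum_fin_sum_fin hv, ← sum_shuffles_eq_linearExtensionSum]
  rfl

/-- The shuffle identity used in the proof of Proposition 2.1: for every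
`r` with `l ≤ r ≤ n`,
`∑_{σ∈Sh(l,r)} 1/(p_{σ⁻¹(1)}(p_{σ⁻¹(1)}+p_{σ⁻¹(2)})⋯(p_{σ⁻¹(1)}+⋯+p_{σ⁻¹(r-1)}))
  = [1/(p₁(p₁+p₂)⋯(p₁+⋯+p_{l-1}))]·[1/(p_l(p_l+p_{l+1})⋯(p_l+⋯+p_{r-1}))]`.
Here the positive integers `(p₁,…,p_{n-1})` are encoded by `p : Fin (n-1) → ℕ`
with `p_j = p (j-1) + 1`, `{1,…,r-1}` is encoded as `Fin (r-1)`, and `Sh(l,r)` is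
the set of permutations of `Fin (r-1)` monotone increasing on the (0-indexed)
subsets `{i | i < l-1}` and `{i | l-1 ≤ i}`. -/
theorem shuffle_identity_p (n m l : ℕ) (hn : 1 ≤ n) (hm : 1 ≤ m) (hl : 1 ≤ l) (hln : l ≤ n)
    (p : Fin (n - 1) → ℕ)
    (hp : (∑ i ∈ Finset.univ.filter (fun i : Fin (n - 1) => (i : ℕ) < l - 1), (p i + 1)) < m) :
    ∀ r, ∀ _hlr : l ≤ r, ∀ _hrn : r ≤ n,
      ∑ σ ∈ Finset.univ.filter (fun σ : Equiv.Perm (Fin (r - 1)) =>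
          (∀ i j : Fin (r - 1), i < j → (j : ℕ) < l - 1 → σ i < σ j) ∧
          (∀ i j : Fin (r - 1), i < j → l - 1 ≤ (i : ℕ) → σ i < σ j)),
        ∏ j : Fin (r - 1),
          (∑ i ∈ Finset.Iic j,
            ((p (Fin.castLE (by omega : r - 1 ≤ n - 1) (σ.symm i)) : ℝ) + 1))⁻¹
      = (∏ j ∈ Finset.univ.filter (fun j : Fin (n - 1) => (j : ℕ) < l - 1),
          (∑ i ∈ Finset.univ.filter (fun i : Fin (n - 1) => i ≤ j), ((p i : ℝ) + 1))⁻¹) *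
        (∏ j ∈ Finset.univ.filter (fun j : Fin (n - 1) => l - 1 ≤ (j : ℕ) ∧ (j : ℕ) < r - 1),
          (∑ i ∈ Finset.univ.filter (fun i : Fin (n - 1) => l - 1 ≤ (i : ℕ) ∧ i ≤ j),
            ((p i : ℝ) + 1))⁻¹) := by
  intro r hlr hrn
  exact shuffle_identity_p_general (Nat.sub_le_sub_right hlr 1) (Nat.sub_le_sub_right hrn 1)
    (fun i => (p i : ℝ) + 1) fun s hs _ => (sum_pos (fun i _ => by positivity) hs).ne'
end

section
/- Let n be a positive integer and ε > 0. Then the series Σ_{m₁,…,mₙ=1}^∞ 1/(m₁(m₁+m₂)⋯(m₁+⋯+m_{n−1})·(m₁+⋯+mₙ)^{1+ε}) converges. -/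
open Finset

/-!
Write `s_j = m₁ + ⋯ + m_j`. The extra factor `s_n ^ ε` of the denominator is shared equally among
its `n` factors: since `m_j ≤ s_j` and `m_j ≤ s_n`, each `s_j * s_n ^ (ε / n)` is at least
`m_j ^ (1 + ε / n)`. The series is therefore dominated by the `n`-fold product of the convergent
series `∑ 1 / m ^ (1 + ε / n)`.
-/

theorem summable_pi_prod_of_nonneg {ι : Type*} [Fintype ι] {κ : ι → Type*} {f : ∀ i, κ i → ℝ}
    (f_nonneg : ∀ i k, 0 ≤ f i k) (hf : ∀ i, Summable (f i)) :
    Summable fun x : ∀ i, κ i => ∏ i, f i (x i) := by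
  classical
  have term_nonneg (x : ∀ i, κ i) : 0 ≤ ∏ i, f i (x i) :=
    prod_nonneg fun i _ => f_nonneg i (x i)
  refine summable_of_sum_le (c := ∏ i, ∑' k, f i k) term_nonneg fun u => ?_
  let box : Finset (∀ i, κ i) := Fintype.piFinset fun i => u.image (· i)
  have u_subset_box : u ⊆ box := fun x hx =>
    Fintype.mem_piFinset.2 fun _ => mem_image_of_mem _ hx
  calc
    ∑ x ∈ u, ∏ i, f i (x i) ≤ ∑ x ∈ box, ∏ i, f i (x i) :=
      sum_le_sum_of_subset_of_nonneg u_subset_box fun x _ _ => term_nonneg x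
    _ = ∏ i, ∑ k ∈ u.image (· i), f i k := (prod_univ_sum _ _).symm
    _ ≤ ∏ i, ∑' k, f i k :=
      prod_le_prod (fun i _ => sum_nonneg fun k _ => f_nonneg i k)
        fun i _ => (hf i).sum_le_tsum _ fun k _ => f_nonneg i k

theorem prod_Icc_one_eq_prod_fin {M : Type*} [CommMonoid M] (f : ℕ → M) (n : ℕ) :
    ∏ j ∈ Icc 1 n, f j = ∏ i : Fin n, f (i + 1) := by
  rw [Fin.prod_univ_eq_prod_range (fun i => f (i + 1)), range_eq_Ico, prod_Ico_add',
    zero_add, Ico_add_one_right_eq_Icc]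

theorem prod_Icc_pred_mul_rpow_one_add {x : ℕ → ℝ} {n : ℕ} (hn : 1 ≤ n) (hx : 0 ≤ x n)
    {ε : ℝ} (hε : 0 ≤ ε) :
    (∏ j ∈ Icc 1 (n - 1), x j) * x n ^ (1 + ε) = (∏ i : Fin n, x (i + 1)) * x n ^ ε := by
  obtain ⟨k, rfl⟩ := Nat.exists_eq_add_of_le' hn
  rw [← prod_Icc_one_eq_prod_fin, prod_Icc_succ_top (Nat.le_add_left 1 k),
    Real.rpow_add_of_nonneg hx zero_le_one hε, Real.rpow_one, Nat.add_sub_cancel, mul_assoc]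

theorem prod_rpow_one_add_div_card_le {ι : Type*} [Fintype ι] [Nonempty ι] {a b : ι → ℝ} {c ε : ℝ}
    (a_nonneg : ∀ i, 0 ≤ a i) (hab : ∀ i, a i ≤ b i) (hac : ∀ i, a i ≤ c) (hε : 0 ≤ ε) :
    ∏ i, a i ^ (1 + ε / Fintype.card ι) ≤ (∏ i, b i) * c ^ ε := by
  have c_nonneg : 0 ≤ c := (a_nonneg (Classical.arbitrary ι)).trans (hac _)
  have share_nonneg : 0 ≤ ε / Fintype.card ι := by positivity
  calc
    ∏ i, a i ^ (1 + ε / Fintype.card ι) = ∏ i, a i * a i ^ (ε / Fintype.card ι) := by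
      simp only [Real.rpow_add_of_nonneg (a_nonneg _) zero_le_one share_nonneg, Real.rpow_one]
    _ ≤ ∏ i, b i * c ^ (ε / Fintype.card ι) :=
      prod_le_prod (fun i _ => mul_nonneg (a_nonneg i) (Real.rpow_nonneg (a_nonneg i) _))
        fun i _ => mul_le_mul (hab i) (Real.rpow_le_rpow (a_nonneg i) (hac i) share_nonneg)
          (Real.rpow_nonneg (a_nonneg i) _) ((a_nonneg i).trans (hab i))
    _ = (∏ i, b i) * c ^ ε := by
      rw [prod_mul_distrib, prod_const, card_univ, ← Real.rpow_mul_natCast c_nonneg,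
        div_mul_cancel₀ _ (Nat.cast_ne_zero.2 Fintype.card_ne_zero)]

theorem add_one_le_PS {N : ℕ} (p : Fin N → ℕ) {i : Fin N} {j : ℕ} (hij : (i : ℕ) < j) :
    p i + 1 ≤ PS p j :=
  single_le_sum_of_canonicallyOrdered (f := fun i => p i + 1)
    (mem_filter.2 ⟨mem_univ i, hij⟩)

theorem prod_add_one_rpow_le_prod_PS {n : ℕ} (hn : 1 ≤ n) {ε : ℝ} (hε : 0 ≤ ε) (p : Fin n → ℕ) :
    ∏ i, ((p i + 1 : ℕ) : ℝ) ^ (1 + ε / n) ≤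
      (∏ j ∈ Icc 1 (n - 1), (PS p j : ℝ)) * (PS p n : ℝ) ^ (1 + ε) := by
  have : Nonempty (Fin n) := ⟨⟨0, hn⟩⟩
  have le_own_partial_sum (i : Fin n) : ((p i + 1 : ℕ) : ℝ) ≤ (PS p (i + 1) : ℝ) :=
    Nat.cast_le.2 (add_one_le_PS p (Nat.lt_add_one i))
  have le_total_sum (i : Fin n) : ((p i + 1 : ℕ) : ℝ) ≤ (PS p n : ℝ) :=
    Nat.cast_le.2 (add_one_le_PS p i.isLt)
  rw [prod_Icc_pred_mul_rpow_one_add (x := fun j => (PS p j : ℝ)) hn (Nat.cast_nonneg _) hε]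
  simpa only [Fintype.card_fin] using
    prod_rpow_one_add_div_card_le (fun i => Nat.cast_nonneg (p i + 1))
      le_own_partial_sum le_total_sum hε

/-- The series `∑_{m₁,…,mₙ≥1} 1/(m₁(m₁+m₂)⋯(m₁+⋯+m_{n-1})(m₁+⋯+mₙ)^{1+ε})`
converges. -/
theorem harmonic_tail_summable (n : ℕ) (hn : 1 ≤ n) (ε : ℝ) (hε : 0 < ε) :
    Summable fun mv : Fin n → ℕ =>
      ((∏ j ∈ Finset.Icc 1 (n - 1), ((PS mv j : ℕ) : ℝ)) *
        ((PS mv n : ℕ) : ℝ) ^ ((1 : ℝ) + ε))⁻¹ := by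
  have one_lt_exponent : 1 < 1 + ε / n :=
    lt_add_of_pos_right 1 (div_pos hε (Nat.cast_pos.2 hn))
  have summable_factor : Summable fun m : ℕ => (((m + 1 : ℕ) : ℝ) ^ (1 + ε / n))⁻¹ :=
    (summable_nat_add_iff 1).2 (Real.summable_nat_rpow_inv.2 one_lt_exponent)
  have summable_majorant :
      Summable fun mv : Fin n → ℕ => ∏ i, (((mv i + 1 : ℕ) : ℝ) ^ (1 + ε / n))⁻¹ :=
    summable_pi_prod_of_nonneg (f := fun _ m => (((m + 1 : ℕ) : ℝ) ^ (1 + ε / n))⁻¹)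
      (fun _ _ => by positivity) fun _ => summable_factor
  refine summable_majorant.of_nonneg_of_le (fun mv => by positivity) fun mv => ?_
  rw [prod_inv_distrib]
  exact inv_anti₀ (prod_pos fun i _ => by positivity) (prod_add_one_rpow_le_prod_PS hn hε.le mv)
end
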